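/- Let ℤ be given the ℤ[ℤ/2]-module structures: M₋ where the generator τ acts by -1, M₊ where τ acts by +1, and let M_reg = ℤ[ℤ/2] be the regular module. Then every finitely generated ℤ-free ℤ[ℤ/2]-module is isomorphic to a direct sum of copies of M₋, M₊, and M_reg. -/

import Mathlib

/-!
If some `x` and some functional `φ` satisfy `φ x = 1` and `φ (τ x) = 0`, then `m ↦ (φ m, φ (τ m))`
and `(r, s) ↦ r • x + s • τ x` exhibit the span of `x` and `τ x` as an equivariant direct summand
isomorphic to the regular lattice, and one concludes by induction on the rank.

To find such a pair, note that `τ` acts by `-1` on `ker (1 + τ)` and trivially on the quotient,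
which is free, so in suitable coordinates `τ` is a block matrix `[[-1, F], [0, 1]]`. An odd entry of
`F` yields a pair `(x, φ)`. If all entries are even, `F = 2G`, then shearing by `G` makes `τ`
diagonal.
-/

open Module Matrix

section Ring

variable {R M P : Type*} [Ring R] [AddCommGroup M] [Module R M] [AddCommGroup P] [Module R P]

/-- The involution `τ` is, up to isomorphism, a direct sum of finitely many copies of the sign,
trivial and regular involutions `r ↦ -r`, `r ↦ r` and `(r, s) ↦ (s, r)`. -/
def IsSignTrivialRegularSum (τ : End R M) : Prop :=
  ∃ (a b c : ℕ) (e : M ≃ₗ[R] (Fin a → R) × (Fin b → R) × (Fin c → R × R)),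
    ∀ x, e (τ x) = (-(e x).1, (e x).2.1, fun i => ((e x).2.2 i).swap)

theorem exists_kerProdEquiv_of_rightInverse {g : M →ₗ[R] P} {s : P →ₗ[R] M}
    (hs : g ∘ₗ s = LinearMap.id) :
    ∃ e : (LinearMap.ker g × P) ≃ₗ[R] M, ∀ k p, e (k, p) = k + s p :=
  ⟨((g.exact_subtype_ker_map.splitSurjectiveEquiv (Submodule.subtype_injective _))
    ⟨s, hs⟩).1.symm, fun _ _ => rfl⟩

theorem exists_equiv_prod_swap {τ : End R M} (hτ : Function.Involutive τ) {x : M} {φ : M →ₗ[R] R}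
    (hx : φ x = 1) (hτx : φ (τ x) = 0) :
    ∃ (N : Submodule R M) (hN : ∀ y ∈ N, τ y ∈ N) (e : (N × R × R) ≃ₗ[R] M),
      ∀ y p, τ (e (y, p)) = e (τ.restrict hN y, p.swap) := by
  let g : M →ₗ[R] R × R := φ.prod (φ ∘ₗ τ)
  let s : R × R →ₗ[R] M := (LinearMap.toSpanSingleton R M x).coprod (.toSpanSingleton R M (τ x))
  have hs : g ∘ₗ s = LinearMap.id := by ext <;> simp [g, s, hx, hτx, hτ x]
  have g_τ (y : M) : g (τ y) = (g y).swap := by simp [g, hτ y]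
  have s_swap (p : R × R) : s p.swap = τ (s p) := by simp [s, hτ x, add_comm]
  obtain ⟨e, he⟩ := exists_kerProdEquiv_of_rightInverse hs
  refine ⟨LinearMap.ker g, fun y hy => ?_, e, fun y p => ?_⟩
  · rw [LinearMap.mem_ker] at hy ⊢
    rw [g_τ, hy, Prod.swap_zero]
  · rw [he, he, map_add, s_swap, LinearMap.coe_restrict_apply]

theorem IsSignTrivialRegularSum.of_equiv_prod_swap {σ : End R P} {τ : End R M}
    (hσ : IsSignTrivialRegularSum σ) (e : (P × R × R) ≃ₗ[R] M)
    (he : ∀ y p, τ (e (y, p)) = e (σ y, p.swap)) : IsSignTrivialRegularSum τ := by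
  obtain ⟨a, b, c, d, hd⟩ := hσ
  let cons : ((Fin c → R × R) × R × R) ≃ₗ[R] (Fin (c + 1) → R × R) :=
    LinearEquiv.prodComm R _ _ ≪≫ₗ Fin.consLinearEquiv R fun _ => R × R
  let regroup : (((Fin a → R) × (Fin b → R) × (Fin c → R × R)) × R × R) ≃ₗ[R]
      (Fin a → R) × (Fin b → R) × (Fin (c + 1) → R × R) :=
    LinearEquiv.prodAssoc R _ _ _ ≪≫ₗ (LinearEquiv.refl R _).prodCongr
      (LinearEquiv.prodAssoc R _ _ _ ≪≫ₗ (LinearEquiv.refl R _).prodCongr cons)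
  refine ⟨a, b, c + 1, e.symm ≪≫ₗ d.prodCongr (LinearEquiv.refl R _) ≪≫ₗ regroup, fun x => ?_⟩
  obtain ⟨⟨y, p⟩, rfl⟩ := e.surjective x
  refine Prod.ext ?_ (Prod.ext ?_ (funext <| Fin.cases ?_ fun i => ?_)) <;>
    simp [he, hd, regroup, cons]

end Ring

section CommRing

variable {R M : Type*} [CommRing R] [AddCommGroup M] [Module R M]

theorem exists_equiv_apply_eq_neg_add_mulVec [IsDomain R] [IsPrincipalIdealRing R]
    [Module.Finite R M] [Module.Free R M] {τ : End R M} (hτ : Function.Involutive τ) :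
    ∃ (m n : ℕ) (F : Matrix (Fin m) (Fin n) R) (e : M ≃ₗ[R] (Fin m → R) × (Fin n → R)),
      ∀ x, e (τ x) = (-(e x).1 + F *ᵥ (e x).2, (e x).2) := by
  let π := (LinearMap.id + τ).rangeRestrict
  have coe_π (x : M) : (π x : M) = x + τ x := rfl
  have τ_ker (k : LinearMap.ker π) : τ k = -(k : M) :=
    (neg_eq_of_add_eq_zero_right ((coe_π k).symm.trans (congrArg Subtype.val k.2))).symm
  have π_τ (x : M) : π (τ x) = π x := Subtype.ext <| by rw [coe_π, coe_π, hτ, add_comm]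
  obtain ⟨s, hs⟩ := π.exists_rightInverse_of_surjective (LinearMap.range_rangeRestrict _)
  obtain ⟨E, hE⟩ := exists_kerProdEquiv_of_rightInverse hs
  let f : LinearMap.range (LinearMap.id + τ) →ₗ[R] LinearMap.ker π :=
    ((τ - LinearMap.id) ∘ₗ s).codRestrict _ fun p => by simp [π_τ]
  have coe_f (p) : (f p : M) = τ (s p) - s p := rfl
  have τ_E (k p) : τ (E (k, p)) = E (-k + f p, p) := by
    rw [hE, hE, map_add, τ_ker, Submodule.coe_add, Submodule.coe_neg, coe_f]
    abel
  let u := (finBasis R (LinearMap.ker π)).equivFun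
  let v := (finBasis R (LinearMap.range (LinearMap.id + τ))).equivFun
  refine ⟨_, _, LinearMap.toMatrix' (u ∘ₗ f ∘ₗ v.symm), E.symm ≪≫ₗ u.prodCongr v, fun x => ?_⟩
  obtain ⟨⟨k, p⟩, rfl⟩ := E.surjective x
  simp [τ_E, LinearMap.toMatrix'_mulVec]

theorem exists_apply_eq_one_and_apply_eq_zero_of_odd {m n : Type*} [Fintype n] {τ : End R M}
    {F : Matrix m n R} {e : M ≃ₗ[R] (m → R) × (n → R)}
    (he : ∀ x, e (τ x) = (-(e x).1 + F *ᵥ (e x).2, (e x).2)) {i : m} {j : n} (hF : Odd (F i j)) :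
    ∃ (x : M) (φ : M →ₗ[R] R), φ x = 1 ∧ φ (τ x) = 0 := by
  classical
  obtain ⟨c, hc⟩ := hF
  let ψ : ((m → R) × (n → R)) →ₗ[R] R :=
    (-LinearMap.proj i).coprod ((c + 1) • LinearMap.proj j)
  refine ⟨e.symm (Pi.single i c, Pi.single j 1), ψ ∘ₗ e, ?_, ?_⟩
  · simp [ψ]
  · simp [ψ, he, hc]
    ring

theorem isSignTrivialRegularSum_of_even {m n : ℕ} {τ : End R M} {F : Matrix (Fin m) (Fin n) R}
    {e : M ≃ₗ[R] (Fin m → R) × (Fin n → R)}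
    (he : ∀ x, e (τ x) = (-(e x).1 + F *ᵥ (e x).2, (e x).2)) (hF : ∀ i j, Even (F i j)) :
    IsSignTrivialRegularSum τ := by
  choose G hG using hF
  obtain ⟨G, rfl⟩ : ∃ G, F = G + G := ⟨G, Matrix.ext hG⟩
  let addZero : (Fin n → R) ≃ₗ[R] (Fin n → R) × (Fin 0 → R × R) := LinearEquiv.prodUnique.symm
  let shear := addZero.skewProd (LinearEquiv.refl R (Fin m → R)) (-G.mulVecLin)
  refine ⟨m, n, 0, e ≪≫ₗ LinearEquiv.prodComm R _ _ ≪≫ₗ shear ≪≫ₗ LinearEquiv.prodComm R _ _,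
    fun x => Prod.ext ?_ (Prod.ext ?_ (Subsingleton.elim _ _))⟩
  · simp [shear, he, add_mulVec]
    abel
  · simp [shear, addZero, he]

theorem reiner_classification_order_two_general [IsDomain R] [IsPrincipalIdealRing R]
    [Module.Finite R M] [Module.Free R M] (hR : ∀ r : R, Even r ∨ Odd r) {τ : End R M}
    (hτ : Function.Involutive τ) : IsSignTrivialRegularSum τ := by
  induction hrank : finrank R M using Nat.strong_induction_on generalizing M with
  | _ r ih =>
    obtain ⟨m, n, F, e, he⟩ := exists_equiv_apply_eq_neg_add_mulVec hτ
    by_cases hF : ∀ i j, Even (F i j)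
    · exact isSignTrivialRegularSum_of_even he hF
    push Not at hF
    obtain ⟨i, j, hij⟩ := hF
    obtain ⟨x, φ, hx, hτx⟩ :=
      exists_apply_eq_one_and_apply_eq_zero_of_odd he ((hR _).resolve_left hij)
    obtain ⟨N, hN, d, hd⟩ := exists_equiv_prod_swap hτ hx hτx
    have rank_lt : finrank R N < r := by
      rw [← hrank, ← d.finrank_eq, finrank_prod, finrank_prod, finrank_self]
      lia
    exact (ih _ rank_lt (fun y => Subtype.ext (hτ y)) rfl).of_equiv_prod_swap d hd

end CommRing

/-- Reiner's classification of `ℤ[ℤ/2]`-lattices: every finitely generated `ℤ`-free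
module `M` with an action of `ℤ/2` (given by an additive involution `τ`) decomposes as
a direct sum of copies of the sign module `M₋` (`τ` acts by `-1`), the trivial module
`M₊` (`τ` acts by `+1`), and the regular module `M_reg = ℤ[ℤ/2]` (`τ` swaps a basis
pair). Concretely: there are `a, b, c` and an additive isomorphism
`e : M ≃+ (Fin a → ℤ) × (Fin b → ℤ) × (Fin c → ℤ × ℤ)` transporting `τ` to
(negation, identity, coordinate swap). -/
theorem reiner_classification_order_two (M : Type*) [AddCommGroup M]
    [Module.Finite ℤ M] [Module.Free ℤ M]
    (τ : M ≃+ M) (hτ : ∀ x, τ (τ x) = x) :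
    ∃ (a b c : ℕ) (e : M ≃+ ((Fin a → ℤ) × (Fin b → ℤ) × (Fin c → ℤ × ℤ))),
      ∀ x : M, e (τ x) =
        (-(e x).1, (e x).2.1, fun i => Prod.swap ((e x).2.2 i)) := by
  obtain ⟨a, b, c, e, he⟩ := reiner_classification_order_two_general Int.even_or_odd
    (τ := τ.toIntLinearEquiv.toLinearMap) hτ
  exact ⟨a, b, c, e.toAddEquiv, he⟩
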